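/- Suppose S ⊆ ℤ/qℤ with |S| > (11/32)q. Then S + S contains a quadratic residue modulo q, i.e. there exist s, s' ∈ S and x ∈ ℤ/qℤ with s + s' = x². -/

import Mathlib

/-!
Suppose no sum of two elements of `S` is a square. Split `ZMod q` into its `2`-part and its odd part
`Q`. Some family of squares of `Q` has all its nontrivial exponential sums of modulus at most `1/2`:
all squares if `3 ∤ #Q`, and a reweighting of them at powers of `3`. By Parseval, if no sum
`a + b` with `a ∈ A`, `b ∈ B` is a square of `Q`, the densities `α ≤ β` of `A`, `B` satisfy
`4αβ ≤ (1 - α)(1 - β)`, whence `α ≤ 1/3` and `2α + β ≤ 1`.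

In the `2`-part everything that is `1` mod `8` or `4` mod `32` is a square. For residues `r`, `r'`
with such a sum, the bound applies to the unions of all fibers of `S` above `r` and `r'`. If
`r + r'` is merely the residue of a square `w²`, it applies to the fibers above `t` and `w² - t`,
and can be averaged over `t`. What is left is linear optimisation: the constraints mod `32` show
that `S` has relative density at most `3/8` in the classes `0` and `2` mod `4`, and with this input
the constraints mod `8` give `11/32`.
-/

open Finset
open scoped BigOperators ComplexConjugate

universe u

open Polynomial in
lemma isSquare_one_add_four_mul {R : Type*} [CommRing R] {a : R} (ha : IsNilpotent a) :
    IsSquare (1 + 4 * a) := by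
  have hderiv : IsUnit (aeval (0 : R) (derivative (X ^ 2 + X - C a))) := by simp
  obtain ⟨y, ⟨-, hy⟩, -⟩ :=
    existsUnique_nilpotent_sub_and_aeval_eq_zero (P := X ^ 2 + X - C a) (by simpa) hderiv
  have hy : y ^ 2 + y - a = 0 := by simpa using hy
  exact ⟨1 + 2 * y, by linear_combination -4 * hy⟩

lemma isSquare_one_add_eight_mul {R : Type*} [CommRing R] (h : IsNilpotent (2 : R)) (s : R) :
    IsSquare (1 + 8 * s) := by
  have := isSquare_one_add_four_mul ((Commute.all 2 s).isNilpotent_mul_right h)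
  convert! this using 1
  ring

lemma isSquare_one_add_three_mul {R : Type*} [CommRing R] (h : IsNilpotent (3 : R)) (s : R) :
    IsSquare (1 + 3 * s) := by
  obtain ⟨u, hu⟩ := h.isUnit_one_add.exists_right_inv
  have := isSquare_one_add_four_mul ((Commute.all 3 (u * s)).isNilpotent_mul_right h)
  convert! this using 1
  linear_combination -3 * s * hu

lemma isNilpotent_natCast_zmod_pow (p n : ℕ) : IsNilpotent (p : ZMod (p ^ n)) :=
  ⟨n, by exact_mod_cast ZMod.natCast_self (p ^ n)⟩

lemma exists_eq_natCast_add_mul_of_castHom_eq {d n z : ℕ} (hd : d ∣ n) {t : ZMod n}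
    (ht : ZMod.castHom hd (ZMod d) t = z) : ∃ s : ZMod n, t = z + d * s := by
  obtain ⟨t, rfl⟩ := ZMod.intCast_surjective t
  rw [map_intCast, ← Int.cast_natCast, eq_comm, ZMod.intCast_eq_intCast_iff_dvd_sub] at ht
  obtain ⟨s, hs⟩ := ht
  exact ⟨s, by exact_mod_cast congrArg _ (eq_add_of_sub_eq' hs)⟩

lemma isSquare_of_castHom_zmod_eight_eq_one {n : ℕ} (hn : 8 ∣ 2 ^ n) {t : ZMod (2 ^ n)}
    (ht : ZMod.castHom hn (ZMod 8) t = 1) : IsSquare t := by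
  obtain ⟨s, rfl⟩ := exists_eq_natCast_add_mul_of_castHom_eq (z := 1) hn (by simpa using ht)
  simpa using isSquare_one_add_eight_mul (isNilpotent_natCast_zmod_pow 2 n) s

lemma isSquare_of_castHom_zmod_thirtyTwo_eq_four {n : ℕ} (hn : 32 ∣ 2 ^ n) {t : ZMod (2 ^ n)}
    (ht : ZMod.castHom hn (ZMod 32) t = 4) : IsSquare t := by
  obtain ⟨s, rfl⟩ := exists_eq_natCast_add_mul_of_castHom_eq (z := 4) hn ht
  have hfour : IsSquare (4 : ZMod (2 ^ n)) := ⟨2, by norm_num⟩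
  convert! hfour.mul (isSquare_one_add_eight_mul (isNilpotent_natCast_zmod_pow 2 n) s) using 1
  push_cast
  ring

section Fourier

variable {G : Type*} [AddCommGroup G] [Fintype G]

lemma sum_norm_sq_sum_addChar (A : Finset G) :
    ∑ ψ : AddChar G ℂ, ‖∑ a ∈ A, ψ a‖ ^ 2 = Fintype.card G * #A := by
  classical
  have expand (ψ : AddChar G ℂ) :
      (‖∑ a ∈ A, ψ a‖ ^ 2 : ℂ) = ∑ a ∈ A, ∑ b ∈ A, ψ (a - b) := by
    simp only [← Complex.mul_conj', map_sum, sum_mul_sum, ← AddChar.map_neg_eq_conj,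
      ← AddChar.map_add_eq_mul, sub_eq_add_neg]
  have : ∑ ψ : AddChar G ℂ, (‖∑ a ∈ A, ψ a‖ ^ 2 : ℂ) = Fintype.card G * #A := by
    simp only [expand, sum_comm (s := univ), AddChar.sum_apply_eq_ite, sub_eq_zero]
    simp [mul_comm]
  exact_mod_cast this

lemma sum_erase_zero_norm_sq_sum_addChar [DecidableEq (AddChar G ℂ)] (A : Finset G) :
    ∑ ψ ∈ univ.erase (0 : AddChar G ℂ), ‖∑ a ∈ A, ψ a‖ ^ 2 =
      #A * (Fintype.card G - #A : ℝ) := by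
  have := sum_norm_sq_sum_addChar A
  rw [← add_sum_erase _ _ (mem_univ 0)] at this
  simp only [AddChar.zero_apply, sum_const, nsmul_eq_mul, mul_one, Complex.norm_natCast] at this
  linear_combination this

lemma sum_mul_conj_expect_eq_zero {G ι : Type*} [AddCommGroup G] [Finite G] [Fintype ι]
    {φ : ι → G} {A B : Finset G} (h : ∀ a ∈ A, ∀ b ∈ B, ∀ i, a + b ≠ φ i) :
    ∑ ψ : AddChar G ℂ, (∑ a ∈ A, ψ a) * (∑ b ∈ B, ψ b) * conj (𝔼 i, ψ (φ i)) = 0 := by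
  classical
  have := Fintype.ofFinite G
  have expand (ψ : AddChar G ℂ) :
      (∑ a ∈ A, ψ a) * (∑ b ∈ B, ψ b) * conj (𝔼 i, ψ (φ i)) =
        ∑ a ∈ A, ∑ b ∈ B, 𝔼 i, ψ (a + b - φ i) := by
    rw [sum_mul_sum]
    simp only [map_expect, sum_mul, mul_expect, ← AddChar.map_neg_eq_conj,
      ← AddChar.map_add_eq_mul, sub_eq_add_neg, expect_sum_comm]
  simp only [expand, sum_comm (s := univ)]
  refine sum_eq_zero fun a ha ↦ sum_eq_zero fun b hb ↦ ?_
  rw [← expect_sum_comm]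
  simp only [AddChar.sum_apply_eq_ite, sub_eq_zero, h a ha b hb, if_false, expect_const_zero]

theorem card_mul_card_le_of_norm_expect_le {ι : Type*} [Fintype ι] [Nonempty ι] {φ : ι → G}
    {ρ : ℝ} (hφ : ∀ ψ : AddChar G ℂ, ψ ≠ 0 → ‖𝔼 i, ψ (φ i)‖ ≤ ρ) {A B : Finset G}
    (h : ∀ a ∈ A, ∀ b ∈ B, ∀ i, a + b ≠ φ i) :
    (#A * #B : ℝ) ≤ ρ ^ 2 * ((Fintype.card G - #A) * (Fintype.card G - #B)) := by
  classical
  let F (A : Finset G) (ψ : AddChar G ℂ) : ℝ := ‖∑ a ∈ A, ψ a‖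
  have hle : (#A * #B : ℝ) ≤ ρ * ∑ ψ ∈ univ.erase (0 : AddChar G ℂ), F A ψ * F B ψ := by
    have hsum := sum_mul_conj_expect_eq_zero h
    rw [← add_sum_erase _ _ (mem_univ 0)] at hsum
    simp only [AddChar.zero_apply, sum_const, nsmul_eq_mul, mul_one,
      Fintype.expect_const, map_one] at hsum
    calc (#A * #B : ℝ) = ‖(#A * #B : ℂ)‖ := by simp
      _ = _ := by rw [eq_neg_of_add_eq_zero_left hsum, norm_neg]
      _ ≤ _ := norm_sum_le _ _
      _ ≤ ∑ ψ ∈ univ.erase 0, ρ * (F A ψ * F B ψ) := sum_le_sum fun ψ hψ ↦ by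
        rw [norm_mul, norm_mul, RCLike.norm_conj, mul_comm]
        gcongr
        exact hφ ψ (ne_of_mem_erase hψ)
      _ = _ := (mul_sum _ _ _).symm
  have hsq : (#A * #B : ℝ) ^ 2 ≤
      (#A * #B) * (ρ ^ 2 * ((Fintype.card G - #A) * (Fintype.card G - #B))) :=
    calc (#A * #B : ℝ) ^ 2 ≤ (ρ * ∑ ψ ∈ univ.erase 0, F A ψ * F B ψ) ^ 2 := by gcongr
      _ ≤ ρ ^ 2 * ((∑ ψ ∈ univ.erase 0, F A ψ ^ 2) * ∑ ψ ∈ univ.erase 0, F B ψ ^ 2) := by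
        rw [mul_pow]
        gcongr
        exact sum_mul_sq_le_sq_mul_sq _ _ _
      _ = _ := by
        simp only [F, sum_erase_zero_norm_sq_sum_addChar]
        ring
  have hA : (#A : ℝ) ≤ Fintype.card G := mod_cast card_le_univ A
  have hB : (#B : ℝ) ≤ Fintype.card G := mod_cast card_le_univ B
  rcases (by positivity : (0 : ℝ) ≤ #A * #B).eq_or_lt with h₀ | hpos
  · rw [← h₀]
    have := sub_nonneg.2 hA
    have := sub_nonneg.2 hB
    positivity
  · exact le_of_mul_le_mul_left (by linarith) hpos

theorem dens_mul_dens_le_of_norm_expect_le {ι : Type*} [Fintype ι] [Nonempty ι] {φ : ι → G}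
    {ρ : ℝ} (hφ : ∀ ψ : AddChar G ℂ, ψ ≠ 0 → ‖𝔼 i, ψ (φ i)‖ ≤ ρ) {A B : Finset G}
    (h : ∀ a ∈ A, ∀ b ∈ B, ∀ i, a + b ≠ φ i) :
    (A.dens * B.dens : ℝ) ≤ ρ ^ 2 * ((1 - A.dens) * (1 - B.dens)) := by
  have hcard : (0 : ℝ) < Fintype.card G := mod_cast Fintype.card_pos
  have := card_mul_card_le_of_norm_expect_le hφ h
  simp only [nnratCast_dens]
  field_simp
  linarith

end Fourier

/-- Some finite family of squares of `Q`, possibly with repetitions, is equidistributed up to error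
`ρ`: every nontrivial additive character has an average of norm at most `ρ` over it. The family
need not be all squares: another weighting of them can give a smaller `ρ`. -/
def HasUniformSquares (Q : Type u) [CommRing Q] (ρ : ℝ) : Prop :=
  ∃ (ι : Type u) (_ : Fintype ι) (_ : Nonempty ι) (φ : ι → Q), (∀ i, IsSquare (φ i)) ∧
    ∀ ψ : AddChar Q ℂ, ψ ≠ 0 → ‖𝔼 i, ψ (φ i)‖ ≤ ρ

namespace HasUniformSquares

lemma of_surjective {Q Q' : Type u} [CommRing Q] [CommRing Q'] {ρ : ℝ}
    (hQ : HasUniformSquares Q ρ) (f : Q →+* Q') (hf : Function.Surjective f) :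
    HasUniformSquares Q' ρ := by
  obtain ⟨ι, _, _, φ, hφ, hψ⟩ := hQ
  refine ⟨ι, _, inferInstance, f ∘ φ, fun i ↦ (hφ i).map f, fun ψ hne ↦
    hψ (ψ.compAddMonoidHom f.toAddMonoidHom) fun h ↦ hne ?_⟩
  ext y
  obtain ⟨x, rfl⟩ := hf y
  simpa using DFunLike.congr_fun h x

lemma prod {Q Q' : Type u} [CommRing Q] [CommRing Q'] [Finite Q] [Finite Q'] {ρ : ℝ}
    (hQ : HasUniformSquares Q ρ) (hQ' : HasUniformSquares Q' ρ) :
    HasUniformSquares (Q × Q') ρ := by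
  obtain ⟨ι, _, _, φ, hφ, hψ⟩ := hQ
  obtain ⟨κ, _, _, χ, hχ, hψ'⟩ := hQ'
  refine ⟨ι × κ, inferInstance, inferInstance, fun i ↦ (φ i.1, χ i.2), fun i ↦ ?_,
    fun ψ hne ↦ ?_⟩
  · obtain ⟨⟨x, hx⟩, y, hy⟩ := And.intro (hφ i.1) (hχ i.2)
    exact ⟨(x, y), Prod.ext hx hy⟩
  let ψ₁ := ψ.compAddMonoidHom (AddMonoidHom.inl Q Q')
  let ψ₂ := ψ.compAddMonoidHom (AddMonoidHom.inr Q Q')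
  have ψ_apply (a : Q) (b : Q') : ψ (a, b) = ψ₁ a * ψ₂ b := by
    simp [ψ₁, ψ₂, ← AddChar.map_add_eq_mul]
  have hfactor : 𝔼 i : ι × κ, ψ (φ i.1, χ i.2) = (𝔼 i, ψ₁ (φ i)) * 𝔼 j, ψ₂ (χ j) := by
    simp only [ψ_apply, expect_mul_expect, ← univ_product_univ, expect_product]
  have norm_le_one {ι Q : Type u} [Fintype ι] [Nonempty ι] [CommRing Q] [Finite Q]
      (φ : ι → Q) (ψ : AddChar Q ℂ) : ‖𝔼 i, ψ (φ i)‖ ≤ 1 :=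
    (RCLike.norm_expect_le (K := ℂ)).trans (by simp)
  rw [hfactor, norm_mul]
  by_cases h₁ : ψ₁ = 0
  · have h₂ : ψ₂ ≠ 0 := by
      rintro h₂
      exact hne (by ext ⟨a, b⟩; simp [ψ_apply, h₁, h₂])
    exact (mul_le_of_le_one_left (norm_nonneg _) (norm_le_one _ _)).trans (hψ' _ h₂)
  · exact (mul_le_of_le_one_right (norm_nonneg _) (norm_le_one _ _)).trans (hψ _ h₁)

end HasUniformSquares

section GaussSum

variable {R : Type*} [CommRing R] [Fintype R]

lemma norm_sq_expect_addChar_sq_le [DecidableEq (AddChar R ℂ)] (ψ : AddChar R ℂ) :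
    ‖𝔼 x, ψ (x ^ 2)‖ ^ 2 ≤ 𝔼 h, if ψ.mulShift (2 * h) = 0 then (1 : ℝ) else 0 := by
  have expand : (‖𝔼 x, ψ (x ^ 2)‖ ^ 2 : ℂ) = 𝔼 h, ψ (h ^ 2) * 𝔼 y, ψ.mulShift (2 * h) y := by
    calc (‖𝔼 x, ψ (x ^ 2)‖ ^ 2 : ℂ) = 𝔼 y, 𝔼 x, ψ (x ^ 2 - y ^ 2) := by
          rw [← Complex.conj_mul', map_expect, expect_mul_expect]
          simp only [← AddChar.map_neg_eq_conj, ← AddChar.map_add_eq_mul, neg_add_eq_sub]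
      _ = 𝔼 y, 𝔼 h, ψ ((h + y) ^ 2 - y ^ 2) :=
          expect_congr rfl fun y _ ↦ Fintype.expect_equiv (Equiv.subRight y) _ _ fun x ↦ by simp
      _ = _ := by
          rw [expect_comm]
          refine expect_congr rfl fun h _ ↦ ?_
          rw [mul_expect]
          refine expect_congr rfl fun y _ ↦ ?_
          rw [AddChar.mulShift_apply, ← AddChar.map_add_eq_mul]
          ring_nf
  calc ‖𝔼 x, ψ (x ^ 2)‖ ^ 2 = ‖𝔼 h, ψ (h ^ 2) * 𝔼 y, ψ.mulShift (2 * h) y‖ := by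
        rw [← expand]; simp
    _ ≤ _ := RCLike.norm_expect_le (K := ℂ)
    _ = _ := expect_congr rfl fun h _ ↦ by
        rw [norm_mul, AddChar.norm_apply, one_mul, AddChar.expect_eq_ite]
        split_ifs <;> simp

lemma norm_expect_addChar_sq_le_half (hR : (Fintype.card R).Coprime 6) {ψ : AddChar R ℂ}
    (hψ : ψ ≠ 0) : ‖𝔼 x, ψ (x ^ 2)‖ ≤ 1 / 2 := by
  classical
  let shift : R →+ AddChar R ℂ :=
    { toFun h := ψ.mulShift (2 * h)
      map_zero' := by simp [AddChar.one_eq_zero]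
      map_add' a b := by rw [mul_add, ← AddChar.mulShift_mul]; rfl }
  have hunit : IsUnit (2 : R) := by
    have := ((hR.coprime_dvd_right (by norm_num : 2 ∣ 6)).cast (R := R))
    simpa [isCoprime_zero_left] using this
  have hker : shift.ker ≠ ⊤ := fun hker ↦ hψ <| by
    obtain ⟨y, hy⟩ := hunit.exists_right_inv
    have : shift y = 0 := shift.mem_ker.1 (hker ▸ AddSubgroup.mem_top y)
    simpa [shift, hy] using this
  have hindex : 4 ≤ shift.ker.index := by
    have hcop : shift.ker.index.Coprime 6 :=
      hR.coprime_dvd_left (Nat.card_eq_fintype_card (α := R) ▸ shift.ker.index_dvd_card)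
    have : ∀ i < 4, i.Coprime 6 → i = 1 := by decide
    by_contra! hlt
    exact hker (AddSubgroup.index_eq_one.1 (this _ hlt hcop))
  have hcard : #{h | shift h = 0} * shift.ker.index = Fintype.card R := by
    rw [← Nat.card_eq_fintype_card, ← shift.ker.card_mul_index, ← Fintype.card_subtype,
      ← Nat.card_eq_fintype_card]
    rfl
  refine (sq_le_sq₀ (norm_nonneg _) (by norm_num)).1 ?_
  calc ‖𝔼 x, ψ (x ^ 2)‖ ^ 2 ≤ 𝔼 h, if shift h = 0 then (1 : ℝ) else 0 :=
        norm_sq_expect_addChar_sq_le ψ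
    _ = #{h | shift h = 0} / Fintype.card R := by
        rw [Fintype.expect_eq_sum_div_card, sum_boole]
    _ ≤ (1 / 2) ^ 2 := by
        rw [div_le_iff₀ (by positivity), ← hcard]
        have : (4 : ℝ) ≤ shift.ker.index := mod_cast hindex
        push_cast
        nlinarith

end GaussSum

lemma norm_one_add_of_pow_three_eq_one {z : ℂ} (hz : z ^ 3 = 1) (hz₁ : z ≠ 1) :
    ‖1 + z‖ = 1 := by
  have hroot : 1 + z = -z ^ 2 := by
    have : (z - 1) * (1 + z + z ^ 2) = 0 := by linear_combination hz
    linear_combination (mul_eq_zero.1 this).resolve_left (sub_ne_zero.2 hz₁)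
  rw [hroot, norm_neg, norm_pow, Complex.norm_eq_one_of_pow_eq_one hz three_ne_zero, one_pow]

lemma hasUniformSquares_of_card_coprime_six (R : Type u) [CommRing R] [Finite R]
    (hR : (Nat.card R).Coprime 6) : HasUniformSquares R (1 / 2) := by
  have := Fintype.ofFinite R
  rw [Nat.card_eq_fintype_card] at hR
  exact ⟨R, _, inferInstance, fun x ↦ x ^ 2, IsSquare.sq, fun ψ ↦ norm_expect_addChar_sq_le_half hR⟩

lemma hasUniformSquares_zmod_three_pow (n : ℕ) : HasUniformSquares (ZMod (3 ^ n)) (1 / 2) := by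
  -- All squares with equal weight would not do: mod `3` their mean has norm `√3 / 3 > 1 / 2`.
  refine ⟨Bool × ZMod (3 ^ n), inferInstance, inferInstance,
    fun i ↦ if i.1 then 1 + 3 * i.2 else 0, ?_, fun ψ hψ ↦ ?_⟩
  · rintro ⟨_ | _, s⟩
    · simp
    · simpa using isSquare_one_add_three_mul (isNilpotent_natCast_zmod_pow 3 n) s
  have hexpect : 𝔼 i : Bool × ZMod (3 ^ n), ψ (if i.1 then 1 + 3 * i.2 else 0) =
      (1 + ψ 1 * 𝔼 s, ψ.mulShift 3 s) / 2 := by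
    simp only [← univ_product_univ, expect_product, Fintype.expect_eq_sum_div_card (ι := Bool)]
    simp [add_comm, AddChar.map_add_eq_mul, mul_expect]
  have hone : ψ 1 ≠ 1 := (AddChar.zmod_char_ne_one_iff _ ψ).1 hψ
  have hnorm : ‖1 + ψ 1 * 𝔼 s, ψ.mulShift 3 s‖ = 1 := by
    by_cases h₃ : ψ.mulShift 3 = 0
    · have hcube : ψ 1 ^ 3 = 1 := by
        simpa [← AddChar.map_nsmul_eq_pow] using DFunLike.congr_fun h₃ 1
      simp [h₃, norm_one_add_of_pow_three_eq_one hcube hone]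
    · rw [AddChar.expect_eq_zero_iff_ne_zero.2 h₃, mul_zero, add_zero, norm_one]
  rw [hexpect, norm_div, hnorm]
  norm_num

theorem hasUniformSquares_zmod_of_odd {m : ℕ} (hm : Odd m) :
    HasUniformSquares (ZMod m) (1 / 2) := by
  obtain ⟨e, n, hn, rfl⟩ := Nat.exists_eq_pow_mul_and_not_dvd hm.pos.ne' 3 (by norm_num)
  have hn₃ : n.Coprime 3 := ((Nat.prime_three.coprime_iff_not_dvd).2 hn).symm
  have hn₂ : n.Coprime 2 := (Nat.odd_mul.1 hm).2.coprime_two_right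
  have : NeZero n := ⟨by rintro rfl; simp at hn⟩
  have hcop : (Nat.card (ZMod n)).Coprime 6 := by
    rw [Nat.card_zmod]
    exact hn₂.mul_right hn₃
  let crt := (ZMod.chineseRemainder (hn₃.symm.pow_left e)).symm
  exact ((hasUniformSquares_zmod_three_pow e).prod
    (hasUniformSquares_of_card_coprime_six (ZMod n) hcop)).of_surjective (crt : _ →+* _)
      crt.surjective

/-- The constraints on a mod `8` profile `x`, `C` (see `IsProfile`), organised along the pairs
`(2k + 1, -2k)` of residues with sum `1`. Here `u k = x (2k + 1) - 1/3`, `v k = x (-2k) - 1/3` and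
`t k = C (2k + 1) - C (-2k)`. Odd residues with neighbouring indices `k`, `k + 1` have a sum
divisible by `4`, hence a square mod `8`, and so do even residues with opposite indices `k`,
`k + 2`. -/
structure IsFourCycleWeight (t u v : ZMod 4 → ℝ) : Prop where
  odd_le : ∀ k, u k ≤ max (t k) (t k / 2)
  even_le : ∀ k, v k ≤ max (-t k) (-t k / 2)
  even_le_sixth : ∀ k, v k ≤ 1 / 6
  odd_add_le : ∀ k, u k + u (k + 1) ≤ max 0 (max (t k) (t (k + 1))) / 2
  even_add_le : ∀ k, v k + v (k + 2) ≤ max 0 (max (-t k) (-t (k + 2))) / 2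
  even_add_le_twelfth : ∀ k, v k + v (k + 2) ≤ 1 / 12

namespace IsFourCycleWeight

variable {t u v : ZMod 4 → ℝ}

lemma shift (h : IsFourCycleWeight t u v) (c : ZMod 4) :
    IsFourCycleWeight (fun k ↦ t (k + c)) (fun k ↦ u (k + c)) (fun k ↦ v (k + c)) where
  odd_le _ := h.odd_le _
  even_le _ := h.even_le _
  even_le_sixth _ := h.even_le_sixth _
  odd_add_le k := by simpa only [add_right_comm] using h.odd_add_le (k + c)
  even_add_le k := by simpa only [add_right_comm] using h.even_add_le (k + c)
  even_add_le_twelfth k := by simpa only [add_right_comm] using h.even_add_le_twelfth (k + c)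

lemma reflect (h : IsFourCycleWeight t u v) :
    IsFourCycleWeight (fun k ↦ t (-k)) (fun k ↦ u (-k)) (fun k ↦ v (-k)) where
  odd_le _ := h.odd_le _
  even_le _ := h.even_le _
  even_le_sixth _ := h.even_le_sixth _
  odd_add_le k := by
    simpa [add_comm, max_comm] using h.odd_add_le (-(k + 1))
  even_add_le k := by
    simpa [add_comm, max_comm] using h.even_add_le (-(k + 2))
  even_add_le_twelfth k := by
    simpa [add_comm] using h.even_add_le_twelfth (-(k + 2))

lemma odd_add_le_of_le (h : IsFourCycleWeight t u v) {k l : ZMod 4} {a : ℝ} (ha : 0 ≤ a)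
    (hk : t k ≤ a) (hl : t (k + 1) ≤ a) (hkl : k + 1 = l := by rfl) : u k + u l ≤ a / 2 := by
  subst hkl
  linarith [h.odd_add_le k, max_le ha (max_le hk hl)]

lemma even_add_le_of_le (h : IsFourCycleWeight t u v) {k l : ZMod 4} {a : ℝ} (ha : 0 ≤ a)
    (hk : -a ≤ t k) (hl : -a ≤ t (k + 2)) (hkl : k + 2 = l := by rfl) : v k + v l ≤ a / 2 := by
  subst hkl
  linarith [h.even_add_le k, max_le ha (max_le (neg_le.1 hk) (neg_le.1 hl))]

lemma bounds_of_nonneg (h : IsFourCycleWeight t u v) {k : ZMod 4} (hk : 0 ≤ t k) :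
    u k ≤ t k ∧ v k ≤ -t k / 2 :=
  ⟨(h.odd_le k).trans (max_le le_rfl (by linarith)),
    (h.even_le k).trans (max_le (by linarith) le_rfl)⟩

lemma bounds_of_nonpos (h : IsFourCycleWeight t u v) {k : ZMod 4} (hk : t k ≤ 0) :
    u k ≤ t k / 2 ∧ v k ≤ -t k :=
  ⟨(h.odd_le k).trans (max_le (by linarith) le_rfl),
    (h.even_le k).trans (max_le le_rfl (by linarith))⟩

lemma sum_le_of_sorted (h : IsFourCycleWeight t u v) (hmax : ∀ k, t k ≤ t 0) (h₃₁ : t 3 ≤ t 1) :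
    (u 0 + u 1 + u 2 + u 3) + (v 0 + v 1 + v 2 + v 3) ≤ 1 / 12 := by
  have h₁₀ := hmax 1
  have h₂₀ := hmax 2
  rcases le_total (t 0) 0 with h₀ | h₀
  · have := h.bounds_of_nonpos h₀
    have := h.bounds_of_nonpos (k := 1) (by linarith)
    have := h.bounds_of_nonpos (k := 2) (by linarith)
    have := h.bounds_of_nonpos (k := 3) (by linarith)
    have : v 0 + v 2 ≤ -t 2 / 2 := h.even_add_le_of_le (by linarith) (by linarith) (by simp)
    have : v 1 + v 3 ≤ -t 3 / 2 := h.even_add_le_of_le (by linarith) (by linarith) (neg_neg _).le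
    linarith
  have : u 0 + u 1 ≤ t 0 / 2 := h.odd_add_le_of_le h₀ le_rfl h₁₀
  have := h.bounds_of_nonneg h₀
  have := h.even_le_sixth 2
  rcases le_total 0 (t 3) with h₃ | h₃ <;> rcases le_total 0 (t 2) with h₂ | h₂
  · have := h.bounds_of_nonneg (h₃.trans h₃₁)
    have := h.bounds_of_nonneg h₂
    have := h.bounds_of_nonneg h₃
    have : u 2 + u 3 ≤ (t 2 + t 3) / 2 :=
      h.odd_add_le_of_le (add_nonneg h₂ h₃) (by simpa) (le_add_of_nonneg_left h₂)
    linarith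
  · have := h.bounds_of_nonneg (h₃.trans h₃₁)
    have := h.bounds_of_nonpos h₂
    have := h.bounds_of_nonneg h₃
    linarith
  · have := h.bounds_of_nonneg h₂
    have : u 2 + u 3 ≤ t 2 / 2 := h.odd_add_le_of_le h₂ le_rfl (h₃.trans h₂)
    have : v 1 + v 3 ≤ 1 / 12 := h.even_add_le_twelfth 1
    linarith
  · have := h.bounds_of_nonpos h₂
    have := h.bounds_of_nonpos h₃
    have : v 1 + v 3 ≤ -t 3 / 2 := h.even_add_le_of_le (by linarith) (by linarith) (neg_neg _).le
    linarith

theorem sum_le (h : IsFourCycleWeight t u v) : ∑ k, (u k + v k) ≤ 1 / 12 := by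
  wlog hsorted : (∀ k, t k ≤ t 0) ∧ t 3 ≤ t 1 generalizing t u v
  · obtain ⟨c, hc⟩ := Finite.exists_max t
    rcases le_total (t (3 + c)) (t (1 + c)) with h₃₁ | h₁₃
    · rw [← Equiv.sum_comp (Equiv.addRight c)]
      exact this (h.shift c) ⟨fun k ↦ by simpa using hc _, h₃₁⟩
    · rw [← Equiv.sum_comp ((Equiv.neg _).trans (Equiv.addRight c))]
      exact this (h.shift c).reflect ⟨fun k ↦ by simpa using hc _, h₁₃⟩
  have hsum : ∑ k, (u k + v k) = (u 0 + u 1 + u 2 + u 3) + (v 0 + v 1 + v 2 + v 3) := by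
    rw [Finset.sum_add_distrib]
    exact congrArg₂ _ (Fin.sum_univ_four u) (Fin.sum_univ_four v)
  exact hsum.trans_le (h.sum_le_of_sorted hsorted.1 hsorted.2)

end IsFourCycleWeight

/-- The linear constraints that a square-avoiding set imposes on its residue classes: `x r` is the
density of the set in the class `r`, `C r` is a bound, at least `1 / 3`, on the density of the union
of its fibers above `r`, and `T` is a set of classes that consist of squares only. -/
structure IsProfile {H : Type*} [CommRing H] (T : Set H) (x C : H → ℝ) : Prop where
  third_le : ∀ r, 1 / 3 ≤ C r
  le_one : ∀ r, C r ≤ 1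
  le_cap : ∀ r, x r ≤ C r
  opposed : ∀ {r r'}, r + r' ∈ T →
    (C r = 1 / 3 ∧ 2 * x r + C r' ≤ 1) ∨ (C r' = 1 / 3 ∧ C r + 2 * x r' ≤ 1)
  add_le : ∀ {r r'}, IsSquare (r + r') → x r + x r' ≤ (1 + max (C r) (C r')) / 2

namespace IsProfile

section General

variable {H : Type*} [CommRing H] {T : Set H} {x C : H → ℝ}

lemma add_le_of_caps (h : IsProfile T x C) {r r' : H} (hr : IsSquare (r + r')) :
    x r + x r' ≤ 1 / 3 + (C r + C r') / 2 := by
  have hmax : max (C r) (C r') ≤ C r + C r' - 1 / 3 :=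
    max_le (by linarith [h.third_le r']) (by linarith [h.third_le r])
  linarith [h.add_le hr]

lemma add_le_one (h : IsProfile T x C) {r r' : H} (hr : IsSquare (r + r')) : x r + x r' ≤ 1 := by
  linarith [h.add_le hr, max_le (h.le_one r) (h.le_one r')]

lemma two_mul_le (h : IsProfile T x C) {r : H} (hr : IsSquare (r + r)) :
    2 * x r ≤ (1 + C r) / 2 := by
  linarith [h.add_le hr, max_self (C r)]

lemma le_third_of_add_self_mem (h : IsProfile T x C) {r : H} (hr : r + r ∈ T) :
    C r = 1 / 3 ∧ x r ≤ 1 / 3 := by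
  rcases h.opposed hr with ⟨hC, hx⟩ | ⟨hC, hx⟩ <;> constructor <;> linarith

lemma sum_path_le (h : IsProfile T x C) {p₀ p₁ p₂ p₃ : H} (h₀ : IsSquare (p₀ + p₀))
    (h₀₁ : p₀ + p₁ ∈ T) (h₁₂ : IsSquare (p₁ + p₂)) (h₂₃ : p₂ + p₃ ∈ T)
    (h₃ : IsSquare (p₃ + p₃)) :
    x p₀ + x p₁ + x p₂ + x p₃ ≤ 3 / 2 := by
  have loop₀ := h.two_mul_le h₀
  have loop₃ := h.add_le_one h₃
  have edge := h.add_le_of_caps h₁₂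
  have := h.le_one p₁
  have := h.le_one p₂
  rcases h.opposed h₀₁ with ⟨_, _⟩ | ⟨_, _⟩ <;> rcases h.opposed h₂₃ with ⟨_, _⟩ | ⟨_, _⟩ <;>
    linarith [h.le_cap p₀, h.le_cap p₁, h.le_cap p₂, h.le_cap p₃,
      h.third_le p₀, h.third_le p₁, h.third_le p₂, h.third_le p₃]

lemma le_max_of_add_mem (h : IsProfile T x C) {r r' : H} (hr : r + r' ∈ T) :
    x r - 1 / 3 ≤ max (C r - C r') ((C r - C r') / 2) := by
  rcases h.opposed hr with ⟨hC, hx⟩ | ⟨hC, -⟩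
  · exact le_max_of_le_right (by linarith)
  · exact le_max_of_le_left (by linarith [h.le_cap r])

lemma cap_le_max_of_add_mem (h : IsProfile T x C) {r r' : H} (hr : r + r' ∈ T) :
    C r - 1 / 3 ≤ max 0 (C r - C r') := by
  rcases h.opposed hr with ⟨hC, -⟩ | ⟨hC, -⟩
  · exact le_max_of_le_left (by linarith)
  · exact le_max_of_le_right (by linarith)

lemma add_le_max_of_add_mem (h : IsProfile T x C) {r r' s s' : H} (hr : r + s ∈ T)
    (hr' : r' + s' ∈ T) (hsq : IsSquare (r + r')) :
    (x r - 1 / 3) + (x r' - 1 / 3) ≤ max 0 (max (C r - C s) (C r' - C s')) / 2 := by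
  have hmax : max (C r) (C r') ≤ 1 / 3 + max 0 (max (C r - C s) (C r' - C s')) := by
    have hr := h.cap_le_max_of_add_mem hr
    have hr' := h.cap_le_max_of_add_mem hr'
    refine max_le ?_ ?_ <;> grind
  linarith [h.add_le hsq]

end General

section Mod32

variable {x C : ZMod 32 → ℝ}

lemma sum_zero_mod_four_le (h : IsProfile {4} x C) :
    (x 0 + x 8 + x 16 + x 24) + (x 4 + x 12 + x 20 + x 28) ≤ 3 := by
  have path₈ := h.sum_path_le (p₀ := 8) (p₁ := 28) (p₂ := 20) (p₃ := 16)
    ⟨4, by decide⟩ (by decide) ⟨4, by decide⟩ (by decide) ⟨0, by decide⟩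
  have path₂₄ := h.sum_path_le (p₀ := 24) (p₁ := 12) (p₂ := 4) (p₃ := 0)
    ⟨4, by decide⟩ (by decide) ⟨4, by decide⟩ (by decide) ⟨0, by decide⟩
  linarith

lemma sum_two_mod_four_le (h : IsProfile {4} x C) :
    (x 2 + x 10 + x 18 + x 26) + (x 6 + x 14 + x 22 + x 30) ≤ 3 := by
  obtain ⟨_, _⟩ := h.le_third_of_add_self_mem (r := 2) (by decide)
  obtain ⟨_, _⟩ := h.le_third_of_add_self_mem (r := 18) (by decide)
  have edge₁ := h.add_le_of_caps (r := 2) (r' := 14) ⟨4, by decide⟩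
  have edge₂ := h.add_le_of_caps (r := 22) (r' := 26) ⟨4, by decide⟩
  have edge₃ := h.add_le_of_caps (r := 10) (r' := 6) ⟨4, by decide⟩
  have edge₄ := h.add_le_of_caps (r := 30) (r' := 18) ⟨4, by decide⟩
  have neg₁ := h.add_le_one (r := 2) (r' := 30) ⟨0, by decide⟩
  have neg₂ := h.add_le_one (r := 18) (r' := 14) ⟨0, by decide⟩
  have neg₃ := h.add_le_one (r := 6) (r' := 26) ⟨0, by decide⟩
  have neg₄ := h.add_le_one (r := 22) (r' := 10) ⟨0, by decide⟩
  rcases h.opposed (r := 14) (r' := 22) (by decide) with ⟨_, _⟩ | ⟨_, _⟩ <;>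
  rcases h.opposed (r := 26) (r' := 10) (by decide) with ⟨_, _⟩ | ⟨_, _⟩ <;>
  rcases h.opposed (r := 6) (r' := 30) (by decide) with ⟨_, _⟩ | ⟨_, _⟩ <;>
  linarith [h.le_one 14, h.le_one 22, h.le_one 26, h.le_one 10, h.le_one 6, h.le_one 30,
    h.le_cap 14, h.le_cap 22, h.le_cap 26, h.le_cap 10, h.le_cap 6, h.le_cap 30]

end Mod32

section Mod8

variable {x C : ZMod 8 → ℝ}

lemma isFourCycleWeight (h : IsProfile {1} x C)
    (h₀₄ : x 0 + x 4 ≤ 3 / 4) (h₂₆ : x 2 + x 6 ≤ 3 / 4) :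
    IsFourCycleWeight (fun k : ZMod 4 ↦ C (2 * k.val + 1) - C (-(2 * k.val)))
      (fun k ↦ x (2 * k.val + 1) - 1 / 3) (fun k ↦ x (-(2 * k.val)) - 1 / 3) := by
  have add_mem (k : ZMod 4) : (2 * k.val + 1 : ZMod 8) + -(2 * k.val) ∈ ({1} : Set (ZMod 8)) := by
    simp
  have add_mem' (k : ZMod 4) : -(2 * k.val : ZMod 8) + (2 * k.val + 1) ∈ ({1} : Set (ZMod 8)) := by
    simp
  have even_mates (k : ZMod 4) : x (-(2 * k.val)) + x (-(2 * (k + 2).val)) ≤ 3 / 4 := by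
    have values : ∀ k : ZMod 4,
        (-(2 * k.val) : ZMod 8) = 0 ∧ (-(2 * (k + 2).val) : ZMod 8) = 4 ∨
        (-(2 * k.val) : ZMod 8) = 4 ∧ (-(2 * (k + 2).val) : ZMod 8) = 0 ∨
        (-(2 * k.val) : ZMod 8) = 2 ∧ (-(2 * (k + 2).val) : ZMod 8) = 6 ∨
        (-(2 * k.val) : ZMod 8) = 6 ∧ (-(2 * (k + 2).val) : ZMod 8) = 2 := by decide
    rcases values k with ⟨hk, hk'⟩ | ⟨hk, hk'⟩ | ⟨hk, hk'⟩ | ⟨hk, hk'⟩ <;> rw [hk, hk'] <;> linarith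
  refine ⟨fun k ↦ h.le_max_of_add_mem (add_mem k), fun k ↦ ?_, fun k ↦ ?_, fun k ↦ ?_, fun k ↦ ?_,
    fun k ↦ ?_⟩
  · rw [neg_sub]
    exact h.le_max_of_add_mem (add_mem' k)
  · have := h.add_le_one (r := -(2 * k.val)) (r' := -(2 * k.val)) (by revert k; decide)
    linarith
  · exact h.add_le_max_of_add_mem (add_mem _) (add_mem _) (by revert k; decide)
  · simp only [neg_sub]
    exact h.add_le_max_of_add_mem (add_mem' _) (add_mem' _) (by revert k; decide)
  · linarith [even_mates k]

theorem sum_zmod_eight_le (h : IsProfile {1} x C) (h₀₄ : x 0 + x 4 ≤ 3 / 4)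
    (h₂₆ : x 2 + x 6 ≤ 3 / 4) : ∑ r, x r ≤ 11 / 4 := by
  have hweight := (h.isFourCycleWeight h₀₄ h₂₆).sum_le
  have hsum₄ : ∑ k : ZMod 4, (x (2 * k.val + 1) - 1 / 3 + (x (-(2 * k.val)) - 1 / 3)) =
      (x 1 - 1 / 3 + (x 0 - 1 / 3)) + (x 3 - 1 / 3 + (x 6 - 1 / 3)) +
        (x 5 - 1 / 3 + (x 4 - 1 / 3)) + (x 7 - 1 / 3 + (x 2 - 1 / 3)) := Fin.sum_univ_four _
  have hsum₈ : ∑ r, x r = x 0 + x 1 + x 2 + x 3 + x 4 + x 5 + x 6 + x 7 := Fin.sum_univ_eight _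
  linarith

end Mod8

end IsProfile

section SurjectiveHom

variable {G H : Type*} [AddGroup G] [AddGroup H] [Fintype G] [DecidableEq H] {f : G →+ H}

lemma card_filter_eq_mul_card [Fintype H] (hf : Function.Surjective f) (b : H) :
    #{a | f a = b} * Fintype.card H = Fintype.card G := by
  have hconst (c : H) : #{a | f a = c} = #{a | f a = b} :=
    AddMonoidHom.card_fiber_eq_of_mem_range f (hf c) (hf b)
  have := card_eq_sum_card_fiberwise (s := univ) (t := univ) (f := f) (fun _ _ ↦ mem_univ _)
  simp only [hconst, sum_const, smul_eq_mul, card_univ] at this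
  rw [this, mul_comm]

lemma card_filter_mem_mul_card [Fintype H] (hf : Function.Surjective f) (s : Finset H) :
    #{a | f a ∈ s} * Fintype.card H = #s * Fintype.card G := by
  have := sum_fiberwise_eq_sum_filter univ s f (fun _ ↦ 1)
  simp only [← card_eq_sum_ones] at this
  simp only [← this, sum_mul, card_filter_eq_mul_card hf, sum_const, smul_eq_mul]

lemma dens_filter_mem [Fintype H] (hf : Function.Surjective f) (s : Finset H) :
    ({a | f a ∈ s} : Finset G).dens = s.dens := by
  rw [dens_eq_card_div_card, dens_eq_card_div_card, div_eq_div_iff (by simp) (by simp)]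
  exact_mod_cast card_filter_mem_mul_card hf s

lemma expect_expect_filter_eq [Finite H] (hf : Function.Surjective f) (s : Finset H) (F : G → ℝ) :
    𝔼 b ∈ s, 𝔼 a with f a = b, F a = 𝔼 a with f a ∈ s, F a := by
  have := Fintype.ofFinite H
  have hH : (Fintype.card H : ℝ) ≠ 0 := by simp
  have hfiber (b : H) : (#{a | f a = b} : ℝ) = Fintype.card G / Fintype.card H := by
    rw [eq_div_iff hH]
    exact_mod_cast card_filter_eq_mul_card hf b
  have hpreimage : (#{a | f a ∈ s} : ℝ) = #s * (Fintype.card G / Fintype.card H) := by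
    rw [mul_div_assoc', eq_div_iff hH]
    exact_mod_cast card_filter_mem_mul_card hf s
  simp only [expect_eq_sum_div_card, hfiber, hpreimage, ← sum_div, sum_fiberwise_eq_sum_filter]
  rw [div_div, mul_comm]

end SurjectiveHom

lemma two_mul_add_max_le {a b : ℝ} (ha : 0 ≤ a) (hab : a ≤ b)
    (h : 4 * (a * b) ≤ (1 - a) * (1 - b)) : 2 * a + max (1 / 3) b ≤ 1 := by
  have ha' : a ≤ 1 / 3 := by nlinarith
  have hb : b ≤ 1 - 2 * a := by nlinarith
  rcases max_choice (1 / 3) b with hmax | hmax <;> rw [hmax] <;> linarith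

lemma HasUniformSquares.two_mul_dens_add_max_le {Q : Type*} [CommRing Q] [Fintype Q]
    (hQ : HasUniformSquares Q (1 / 2)) {A B : Finset Q}
    (h : ∀ a ∈ A, ∀ b ∈ B, ¬IsSquare (a + b)) (hAB : A.dens ≤ B.dens) :
    2 * (A.dens : ℝ) + max (1 / 3) (B.dens : ℝ) ≤ 1 := by
  obtain ⟨ι, _, _, φ, hφ, hψ⟩ := hQ
  have := dens_mul_dens_le_of_norm_expect_le hψ fun a ha b hb i hi ↦ h a ha b hb (hi ▸ hφ i)
  exact two_mul_add_max_le (by positivity) (mod_cast hAB) (by linarith)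

section Fiber

variable {R Q H : Type*}

/-- The set of `y` such that `(t, y)` lies in `S`. -/
noncomputable def fiber (S : Finset (R × Q)) (t : R) : Finset Q :=
  S.preimage (Prod.mk t) (Prod.mk_right_injective t).injOn

lemma mem_fiber {S : Finset (R × Q)} {t : R} {y : Q} : y ∈ fiber S t ↔ (t, y) ∈ S :=
  mem_preimage

lemma sum_card_fiber [Fintype R] (S : Finset (R × Q)) : ∑ t, #(fiber S t) = #S := by
  classical
  rw [card_eq_sum_card_fiberwise (f := Prod.fst) (t := univ) (fun _ _ ↦ mem_univ _)]
  refine sum_congr rfl fun t _ ↦ ?_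
  rw [fiber, card_preimage]
  congr! 2 with p
  aesop

lemma expect_dens_fiber [Fintype R] [Fintype Q] (S : Finset (R × Q)) :
    𝔼 t, ((fiber S t).dens : ℝ) = S.dens := by
  simp only [Fintype.expect_eq_sum_div_card, nnratCast_dens, ← sum_div, ← Nat.cast_sum,
    sum_card_fiber, Fintype.card_prod, Nat.cast_mul, div_div, mul_comm]

variable [CommRing R] [CommRing H] [DecidableEq H]

/-- The density of `S` among the pairs whose first coordinate is sent to `r` by `f`. -/
noncomputable def residueDensity [Fintype R] [Fintype Q] (f : R →+* H) (S : Finset (R × Q))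
    (r : H) : ℝ :=
  𝔼 t with f t = r, ((fiber S t).dens : ℝ)

/-- The union of the fibers of `S` over the `t` sent to `r` by `f`. -/
def fiberUnion [DecidableEq Q] (f : R →+* H) (S : Finset (R × Q)) (r : H) : Finset Q :=
  {p ∈ S | f p.1 = r}.image Prod.snd

/-- The density of the union of the fibers of `S` above `r`, raised to `1 / 3` if it is smaller.
The value `1 / 3` is the largest `a` with `4aa ≤ (1 - a)(1 - a)`. -/
noncomputable def residueCap [Fintype Q] [DecidableEq Q] (f : R →+* H) (S : Finset (R × Q))
    (r : H) : ℝ :=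
  max (1 / 3) (fiberUnion f S r).dens

variable {f : R →+* H}

lemma mem_fiberUnion [DecidableEq Q] {S : Finset (R × Q)} {r : H} {y : Q} :
    y ∈ fiberUnion f S r ↔ ∃ t, (t, y) ∈ S ∧ f t = r := by
  simp [fiberUnion]

lemma dens_fiber_le_dens_fiberUnion [Fintype Q] [DecidableEq Q] (f : R →+* H)
    (S : Finset (R × Q)) (t : R) : (fiber S t).dens ≤ (fiberUnion f S (f t)).dens :=
  dens_le_dens fun _ hy ↦ mem_fiberUnion.2 ⟨t, mem_fiber.1 hy, rfl⟩

lemma dens_fiber_le_residueCap [Fintype Q] [DecidableEq Q] {S : Finset (R × Q)} {t : R} {r : H}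
    (ht : f t = r) : ((fiber S t).dens : ℝ) ≤ residueCap f S r :=
  le_max_of_le_right (ht ▸ mod_cast dens_fiber_le_dens_fiberUnion f S t)

variable [Fintype R]

lemma filter_eq_nonempty (hf : Function.Surjective f) (r : H) :
    ({t | f t = r} : Finset R).Nonempty := by
  obtain ⟨t, rfl⟩ := hf r
  exact ⟨t, by simp⟩

variable [Fintype Q]

lemma expect_residueDensity [Fintype H] (hf : Function.Surjective f) (S : Finset (R × Q)) :
    𝔼 r, residueDensity f S r = S.dens := by
  rw [← expect_dens_fiber]
  simpa [residueDensity] using expect_expect_filter_eq (f := f.toAddMonoidHom) hf univ _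

lemma residueDensity_comp [Fintype H] {K : Type*} [CommRing K] [DecidableEq K]
    (g : H →+* K) (hf : Function.Surjective f) (S : Finset (R × Q)) (r : K) :
    residueDensity (g.comp f) S r = 𝔼 s with g s = r, residueDensity f S s := by
  simpa [residueDensity] using (expect_expect_filter_eq (f := f.toAddMonoidHom) hf {s | g s = r}
    fun t ↦ ((fiber S t).dens : ℝ)).symm

lemma residueDensity_le_dens_fiberUnion [DecidableEq Q] (hf : Function.Surjective f)
    (S : Finset (R × Q)) (r : H) : residueDensity f S r ≤ (fiberUnion f S r).dens := by
  refine expect_le (filter_eq_nonempty hf r) fun t ht ↦ ?_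
  obtain rfl := (mem_filter_univ _).1 ht
  exact_mod_cast dens_fiber_le_dens_fiberUnion f S t

lemma residueDensity_add_residueDensity (f : R →+* H) (S : Finset (R × Q)) (v : R) {r r' : H}
    (hv : f v = r + r') :
    residueDensity f S r + residueDensity f S r' =
      𝔼 t with f t = r, (((fiber S t).dens : ℝ) + (fiber S (v - t)).dens) := by
  have hreflect : residueDensity f S r' = 𝔼 t with f t = r, ((fiber S (v - t)).dens : ℝ) :=
    expect_nbij' (v - ·) (v - ·) (by simp +contextual [hv]) (by simp +contextual [hv])
      (by simp) (by simp) (by simp)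
  rw [hreflect, residueDensity, expect_add_distrib]

end Fiber

/-- No sum of two elements of `S`, equal or not, is a square. -/
def AvoidsSquares {R : Type*} [CommRing R] (S : Finset R) : Prop :=
  ∀ s ∈ S, ∀ s' ∈ S, ¬IsSquare (s + s')

namespace AvoidsSquares

lemma preimage {R R' : Type*} [CommRing R] [CommRing R'] [Fintype R] [DecidableEq R']
    {S : Finset R'} (hS : AvoidsSquares S) (f : R →+* R') :
    AvoidsSquares ({a | f a ∈ S} : Finset R) := by
  intro s hs s' hs' hsq
  exact hS _ (mem_filter.1 hs).2 _ (mem_filter.1 hs').2 (map_add f s s' ▸ hsq.map f)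

section Profile

variable {R Q H : Type*} [CommRing R] [CommRing Q] {S : Finset (R × Q)}

lemma not_isSquare_snd_add {p p' : R × Q} (hS : AvoidsSquares S) (hp : p ∈ S) (hp' : p' ∈ S)
    (hsq : IsSquare (p.1 + p'.1)) : ¬IsSquare (p.2 + p'.2) := by
  rintro ⟨z, hz⟩
  obtain ⟨w, hw⟩ := hsq
  exact hS p hp p' hp' ⟨(w, z), Prod.ext hw hz⟩

lemma dens_fiber_add_dens_fiber_le [Fintype Q] (hS : AvoidsSquares S)
    (hQ : HasUniformSquares Q (1 / 2)) {t t' : R} (hsq : IsSquare (t + t')) :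
    ((fiber S t).dens : ℝ) + (fiber S t').dens ≤
      (1 + max ((fiber S t).dens : ℝ) (fiber S t').dens) / 2 := by
  wlog hle : (fiber S t).dens ≤ (fiber S t').dens generalizing t t'
  · rw [add_comm, max_comm]
    exact this (add_comm t t' ▸ hsq) (le_of_not_ge hle)
  have := hQ.two_mul_dens_add_max_le (fun a ha b hb ↦
    hS.not_isSquare_snd_add (mem_fiber.1 ha) (mem_fiber.1 hb) hsq) hle
  linarith [le_max_right (1 / 3) ((fiber S t').dens : ℝ),
    le_max_right ((fiber S t).dens : ℝ) (fiber S t').dens]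

variable [CommRing H] [DecidableEq H] [Fintype R] [Fintype Q] [DecidableEq Q] {f : R →+* H}

lemma residueDensity_add_residueDensity_le (hS : AvoidsSquares S)
    (hQ : HasUniformSquares Q (1 / 2)) (hf : Function.Surjective f) {r r' : H}
    (hsq : IsSquare (r + r')) :
    residueDensity f S r + residueDensity f S r' ≤
      (1 + max (residueCap f S r) (residueCap f S r')) / 2 := by
  obtain ⟨w, hw⟩ := hsq
  obtain ⟨w, rfl⟩ := hf w
  rw [residueDensity_add_residueDensity f S (w * w) (by rw [map_mul, hw])]
  refine expect_le (filter_eq_nonempty hf r) fun t ht ↦ ?_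
  obtain rfl := (mem_filter_univ _).1 ht
  have ht' : f (w * w - t) = r' := by rw [map_sub, map_mul, ← hw, add_sub_cancel_left]
  refine (hS.dens_fiber_add_dens_fiber_le hQ ⟨w, add_sub_cancel t _⟩).trans ?_
  gcongr
  exacts [dens_fiber_le_residueCap rfl, dens_fiber_le_residueCap ht']

lemma residueCap_eq_third_and_le (hS : AvoidsSquares S) (hQ : HasUniformSquares Q (1 / 2))
    (hf : Function.Surjective f) {r r' : H} (hsq : ∀ t, f t = r + r' → IsSquare t)
    (hle : (fiberUnion f S r).dens ≤ (fiberUnion f S r').dens) :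
    residueCap f S r = 1 / 3 ∧ 2 * residueDensity f S r + residueCap f S r' ≤ 1 := by
  have havoid : ∀ a ∈ fiberUnion f S r, ∀ b ∈ fiberUnion f S r', ¬IsSquare (a + b) := by
    intro a ha b hb
    obtain ⟨t, ht, rfl⟩ := mem_fiberUnion.1 ha
    obtain ⟨t', ht', rfl⟩ := mem_fiberUnion.1 hb
    exact hS.not_isSquare_snd_add ht ht' (hsq _ (map_add f t t'))
  have hdens := hQ.two_mul_dens_add_max_le havoid hle
  refine ⟨max_eq_left ?_, ?_⟩
  · linarith [le_max_left (1 / 3) ((fiberUnion f S r').dens : ℝ)]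
  · rw [residueCap]
    linarith [residueDensity_le_dens_fiberUnion hf S r]

theorem isProfile (hS : AvoidsSquares S) (hQ : HasUniformSquares Q (1 / 2))
    (hf : Function.Surjective f) {T : Set H} (hT : ∀ t, f t ∈ T → IsSquare t) :
    IsProfile T (residueDensity f S) (residueCap f S) where
  third_le _ := le_max_left _ _
  le_one _ := max_le (by norm_num) (mod_cast dens_le_one)
  le_cap _ := (residueDensity_le_dens_fiberUnion hf S _).trans (le_max_right _ _)
  opposed {r r'} hr := by
    rcases le_total (fiberUnion f S r).dens (fiberUnion f S r').dens with hle | hle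
    · exact .inl (hS.residueCap_eq_third_and_le hQ hf (fun t ht ↦ hT t (ht ▸ hr)) hle)
    · obtain ⟨hcap, hadd⟩ := hS.residueCap_eq_third_and_le hQ hf
        (fun t ht ↦ hT t (by rwa [ht, add_comm])) hle
      exact .inr ⟨hcap, add_comm _ (residueCap f S r) ▸ hadd⟩
  add_le := hS.residueDensity_add_residueDensity_le hQ hf

end Profile

lemma expect_filter_castHom_zmod_thirtyTwo (h : 8 ∣ 32) (F : ZMod 32 → ℝ) (a : ZMod 32) :
    𝔼 s with ZMod.castHom h (ZMod 8) s = ZMod.castHom h (ZMod 8) a, F s =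
      (F a + F (a + 8) + F (a + 16) + F (a + 24)) / 4 := by
  have hfiber : ({s | ZMod.castHom h (ZMod 8) s = ZMod.castHom h (ZMod 8) a} : Finset (ZMod 32)) =
      {a, a + 8, a + 16, a + 24} := by
    revert a h
    decide
  rw [expect_eq_sum_div_card, hfiber]
  simp +decide [← add_assoc]

theorem dens_le_of_two_pow {Q : Type*} [CommRing Q] [Fintype Q] {n : ℕ} (hn : 32 ∣ 2 ^ n)
    {S : Finset (ZMod (2 ^ n) × Q)} (hS : AvoidsSquares S) (hQ : HasUniformSquares Q (1 / 2)) :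
    (S.dens : ℝ) ≤ 11 / 32 := by
  classical
  have h₈ : 8 ∣ 32 := by norm_num
  let f := ZMod.castHom hn (ZMod 32)
  let g := ZMod.castHom h₈ (ZMod 8)
  let x := residueDensity f S
  let y := residueDensity (g.comp f) S
  have hf : Function.Surjective f := ZMod.castHom_surjective hn
  have hgf : g.comp f = ZMod.castHom (h₈.trans hn) (ZMod 8) := Subsingleton.elim _ _
  have hprofile₃₂ : IsProfile {4} x (residueCap f S) :=
    hS.isProfile hQ hf fun _ ↦ isSquare_of_castHom_zmod_thirtyTwo_eq_four hn
  have hprofile₈ : IsProfile {1} y (residueCap (g.comp f) S) :=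
    hS.isProfile hQ (hgf ▸ ZMod.castHom_surjective _) fun _ ht ↦
      isSquare_of_castHom_zmod_eight_eq_one (h₈.trans hn) (hgf ▸ ht)
  have average (a : ZMod 32) : y (g a) = (x a + x (a + 8) + x (a + 16) + x (a + 24)) / 4 :=
    (residueDensity_comp g hf S _).trans (expect_filter_castHom_zmod_thirtyTwo h₈ x a)
  have h₀ : y 0 = (x 0 + x 8 + x 16 + x 24) / 4 := average 0
  have h₂ : y 2 = (x 2 + x 10 + x 18 + x 26) / 4 := average 2
  have h₄ : y 4 = (x 4 + x 12 + x 20 + x 28) / 4 := average 4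
  have h₆ : y 6 = (x 6 + x 14 + x 22 + x 30) / 4 := average 6
  have hsum := hprofile₈.sum_zmod_eight_le (by linarith [hprofile₃₂.sum_zero_mod_four_le])
    (by linarith [hprofile₃₂.sum_two_mod_four_le])
  have hexpect : 𝔼 r, y r = S.dens :=
    expect_residueDensity (hgf ▸ ZMod.castHom_surjective _) S
  rw [Fintype.expect_eq_sum_div_card, ZMod.card, Nat.cast_ofNat] at hexpect
  linarith

theorem dens_le {q : ℕ} [NeZero q] {S : Finset (ZMod q)} (hS : AvoidsSquares S) :
    (S.dens : ℝ) ≤ 11 / 32 := by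
  obtain ⟨a, m, hm, rfl⟩ := Nat.exists_eq_two_pow_mul_odd (NeZero.ne q)
  have : NeZero m := ⟨hm.pos.ne'⟩
  have hdvd : 2 ^ a ∣ 2 ^ (a + 5) := pow_dvd_pow 2 (a.le_add_right 5)
  -- Passing from `2 ^ a` to `2 ^ (a + 5)` makes reduction mod `32` available.
  let reduce := (ZMod.castHom hdvd (ZMod (2 ^ a))).prodMap (RingHom.id (ZMod m))
  let crt := (ZMod.chineseRemainder ((Nat.coprime_two_left.2 hm).pow_left a)).symm
  let f := (crt : _ →+* ZMod (2 ^ a * m)).comp reduce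
  have hf : Function.Surjective f :=
    crt.surjective.comp ((ZMod.castHom_surjective hdvd).prodMap Function.surjective_id)
  rw [← dens_filter_mem (f := f.toAddMonoidHom) hf S]
  exact (hS.preimage f).dens_le_of_two_pow (pow_dvd_pow 2 (Nat.le_add_left 5 a))
    (hasUniformSquares_zmod_of_odd hm)

end AvoidsSquares

theorem stmt_13 (q : ℕ) (hq : 0 < q) (S : Finset (ZMod q))
    (hcard : 11 * q < 32 * S.card) :
    ∃ s ∈ S, ∃ s' ∈ S, ∃ x : ZMod q, s + s' = x ^ 2 := by
  have : NeZero q := ⟨hq.ne'⟩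
  by_contra! hne
  have hS : AvoidsSquares S := fun s hs s' hs' hsq ↦
    ((isSquare_iff_exists_sq _).1 hsq).elim (hne s hs s' hs')
  have hdens := hS.dens_le
  rw [nnratCast_dens, ZMod.card, div_le_div_iff₀ (by positivity) (by norm_num)] at hdens
  have : #S * 32 ≤ 11 * q := mod_cast hdens
  lia
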